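/- arXiv:2004.07593 — 3 statements merged into one kernel-verified Lean document; each statement's English description precedes it below -/
import Mathlib

section
/- (Semigroup property of the stable Fourier-multiplier family.) Let α ∈ (0,1), m₁, m₂ ∈ [0,∞) with m₁ + m₂ > 0, β ∈ ℝ, and let f be a complex-valued Schwartz function on ℝ. Then: (a) P_0 f = f; (b) for every s ≥ 0, P_s f is Lebesgue integrable on ℝ and its Fourier transform satisfies (P_s f)^(ξ) = e^{s} f̂(e^{s}ξ) ψ_α(e^{s}ξ)/ψ_α(ξ) for all ξ ∈ ℝ; (c) for all s, t ≥ 0 and x ∈ ℝ, (1/2π) ∫_ℝ (P_s f)^(ξ) e^{iξx e^{-t}} ψ_α(ξ)/ψ_α(e^{-t}ξ) dξ = P_{t+s} f(x), i.e. P_t(P_s f) = P_{t+s} f. -/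
open MeasureTheory

/-- The α-stable Lévy measure on ℝ with density
`u ↦ m₁ u^(-α-1) 1_{(0,∞)}(u) + m₂ |u|^(-α-1) 1_{(-∞,0)}(u)` w.r.t. Lebesgue measure. -/
noncomputable def nuStable (α m₁ m₂ : ℝ) : Measure ℝ :=
  (volume : Measure ℝ).withDensity fun u =>
    ENNReal.ofReal (if 0 < u then m₁ * u ^ (-α - 1) else if u < 0 then m₂ * |u| ^ (-α - 1) else 0)

/-- Location parameter `Γ_α = β - (m₁ - m₂) ∫₀^∞ u^{-α}(1+u²)^{-1} du` for `α ∈ (0,1)`. -/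
noncomputable def Gamma01 (α m₁ m₂ β : ℝ) : ℝ :=
  β - (m₁ - m₂) * ∫ u in Set.Ioi (0 : ℝ), u ^ (-α) / (1 + u ^ 2)

/-- Characteristic function of the `α`-stable law, `α ∈ (0,1)`:
`ψ_α(t) = exp(itΓ_α + ∫_ℝ (e^{itu} - 1) ν_α(du))`. -/
noncomputable def psi01 (α m₁ m₂ β : ℝ) (t : ℝ) : ℂ :=
  Complex.exp (Complex.I * t * (Gamma01 α m₁ m₂ β) +
    ∫ u : ℝ, (Complex.exp (Complex.I * t * u) - 1) ∂(nuStable α m₁ m₂))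

/-- Fourier transform `f̂(ξ) = ∫_ℝ f(x) e^{-ixξ} dx`. -/
noncomputable def fourierT (g : ℝ → ℂ) (ξ : ℝ) : ℂ :=
  ∫ x : ℝ, g x * Complex.exp (-(Complex.I * x * ξ))

/-- The stable Fourier-multiplier family
`P_t f(x) = (1/2π) ∫_ℝ f̂(ξ) e^{iξx e^{-t}} ψ_α(ξ)/ψ_α(e^{-t}ξ) dξ`. -/
noncomputable def Pt (α m₁ m₂ β : ℝ) (t : ℝ) (g : ℝ → ℂ) (x : ℝ) : ℂ :=
  ((1 / (2 * Real.pi) : ℝ) : ℂ) *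
    ∫ ξ : ℝ, fourierT g ξ * Complex.exp (Complex.I * ξ * x * ((Real.exp (-t) : ℝ) : ℂ)) *
      psi01 α m₁ m₂ β ξ / psi01 α m₁ m₂ β (Real.exp (-t) * ξ)

/-!
The stable law is self-decomposable: its Lévy measure `ν` is scaled by `r ^ α` under `u ↦ r u`, so
for `0 < r ≤ 1` the quotient `ψ(ξ) / ψ(rξ)` is the exponential of the drift `(1 - r) Γ` plus the
Lévy–Khintchine exponent of the positive measure `(1 - r ^ α) ν`. It is therefore the characteristic
function of a probability measure `μ`, a limit of compound Poisson laws. With `r = e^{-s}` and `U`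
of law `μ`, Fourier inversion gives `P_s f(x) = 𝔼[f (U + e^{-s} x)]`, which is integrable with the
expected Fourier transform by Fubini. The semigroup law is then the cancellation
`ψ(e^s ξ) / ψ(ξ) · ψ(ξ) / ψ(e^{-t} ξ)` after the substitution `ξ ↦ e^s ξ`.
-/

section StableSemigroup

open Complex Filter Set Topology
open scoped ENNReal NNReal RealInnerProductSpace FourierTransform

section CharFun

variable {E : Type*} [NormedAddCommGroup E] [InnerProductSpace ℝ E] [MeasurableSpace E]

/-- `φ` is the characteristic function of a probability measure on `E`. -/
def IsCharFun (φ : E → ℂ) : Prop :=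
  ∃ μ : ProbabilityMeasure E, charFun (μ : Measure E) = φ

theorem isCharFun_charFun (μ : Measure E) [IsProbabilityMeasure μ] : IsCharFun (charFun μ) :=
  ⟨⟨μ, inferInstance⟩, rfl⟩

theorem isCharFun_charFun_div (ρ : Measure E) [IsFiniteMeasure ρ] [NeZero ρ] :
    IsCharFun fun t ↦ charFun ρ t / ρ.real univ := by
  convert isCharFun_charFun ((ρ univ)⁻¹ • ρ) using 2 with t
  rw [charFun_apply, charFun_apply, integral_smul_measure, ENNReal.toReal_inv,
    ← measureReal_def, Complex.real_smul, ofReal_inv, div_eq_inv_mul]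

variable [BorelSpace E]

theorem isCharFun_cexp_inner (a : E) : IsCharFun fun t ↦ cexp (⟪a, t⟫ * I) := by
  convert isCharFun_charFun (Measure.dirac a) using 1
  exact funext fun t ↦ (charFun_dirac t).symm

section SecondCountable

variable [SecondCountableTopology E]

theorem IsCharFun.mul {φ χ : E → ℂ} (hφ : IsCharFun φ) (hχ : IsCharFun χ) :
    IsCharFun fun t ↦ φ t * χ t := by
  obtain ⟨μ, rfl⟩ := hφ
  obtain ⟨ν, rfl⟩ := hχ
  convert isCharFun_charFun ((μ : Measure E) ∗ (ν : Measure E)) using 1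
  exact funext fun t ↦ (charFun_conv t).symm

theorem IsCharFun.pow {φ : E → ℂ} (hφ : IsCharFun φ) (n : ℕ) : IsCharFun fun t ↦ φ t ^ n := by
  induction n with
  | zero => simpa using isCharFun_cexp_inner (0 : E)
  | succ n ih => simpa only [pow_succ] using ih.mul hφ

end SecondCountable

variable [FiniteDimensional ℝ E]

theorem IsCharFun.of_tendsto {φ : ℕ → E → ℂ} {χ : E → ℂ} (hφ : ∀ n, IsCharFun (φ n))
    (hχ : ContinuousAt χ 0) (hlim : ∀ t, Tendsto (φ · t) atTop (𝓝 (χ t))) : IsCharFun χ := by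
  choose μ hμ using hφ
  obtain rfl : φ = fun n ↦ charFun (μ n : Measure E) := funext fun n ↦ (hμ n).symm
  have htight : IsTightMeasureSet {((ν : ProbabilityMeasure E) : Measure E) | ν ∈ range μ} := by
    convert isTightMeasureSet_of_tendsto_charFun (μ := fun n ↦ (μ n : Measure E)) hχ hlim using 1
    ext ν
    simp
  obtain ⟨ν, -, k, hk, hν⟩ := (isCompact_closure_of_isTightMeasureSet htight).tendsto_subseq
    fun n ↦ subset_closure (mem_range_self n)
  refine ⟨ν, funext fun t ↦ tendsto_nhds_unique ?_ ((hlim t).comp hk.tendsto_atTop)⟩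
  exact ProbabilityMeasure.tendsto_iff_tendsto_charFun.1 hν t

end CharFun

section LevyExponent

variable {E : Type*} [NormedAddCommGroup E] [InnerProductSpace ℝ E]

theorem norm_cexp_inner_sub_one_le (t u : E) :
    ‖cexp (⟪u, t⟫ * I) - 1‖ ≤ (2 + ‖t‖) * min 1 ‖u‖ := by
  have hsmall : ‖cexp (⟪u, t⟫ * I) - 1‖ ≤ ‖u‖ * ‖t‖ :=
    calc ‖cexp (⟪u, t⟫ * I) - 1‖
      _ = ‖cexp (I * ⟪u, t⟫) - 1‖ := by rw [mul_comm]
      _ ≤ ‖⟪u, t⟫‖ := Real.norm_exp_I_mul_ofReal_sub_one_le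
      _ ≤ ‖u‖ * ‖t‖ := norm_inner_le_norm u t
  have hlarge : ‖cexp (⟪u, t⟫ * I) - 1‖ ≤ 2 :=
    calc ‖cexp (⟪u, t⟫ * I) - 1‖
      _ ≤ ‖cexp (⟪u, t⟫ * I)‖ + ‖(1 : ℂ)‖ := norm_sub_le _ _
      _ = 2 := by rw [norm_exp_ofReal_mul_I, norm_one]; norm_num
  rcases le_total 1 ‖u‖ with h | h
  · rw [min_eq_left h]
    linarith [norm_nonneg t]
  · rw [min_eq_right h]
    linarith [norm_nonneg u]

variable [MeasurableSpace E]

/-- The Lévy–Khintchine exponent `t ↦ ∫ (e^{i⟨u,t⟩} - 1) ν(du)` of a Lévy measure `ν` of finite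
variation, that is with `∫ min 1 ‖u‖ ν(du) < ∞`, which is why no compensating term is needed. -/
noncomputable def levyExponent (ν : Measure E) (t : E) : ℂ :=
  ∫ u, (cexp (⟪u, t⟫ * I) - 1) ∂ν

theorem levyExponent_smul_measure (c : ℝ≥0∞) (ν : Measure E) (t : E) :
    levyExponent (c • ν) t = c.toReal * levyExponent ν t := by
  rw [levyExponent, integral_smul_measure, Complex.real_smul, levyExponent]

variable [BorelSpace E]

theorem continuous_levyExponent {ν : Measure E} (hν : Integrable (fun u ↦ min 1 ‖u‖) ν) :
    Continuous (levyExponent ν) := by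
  refine continuous_iff_continuousAt.2 fun t ↦ ?_
  refine continuousAt_of_dominated (bound := fun u ↦ (2 + (‖t‖ + 1)) * min 1 ‖u‖)
    (.of_forall fun s ↦ ?_) ?_ (hν.const_mul _) (ae_of_all _ fun u ↦ by fun_prop)
  · fun_prop
  · have hball : ∀ᶠ s : E in 𝓝 t, ‖s‖ < ‖t‖ + 1 :=
      continuous_norm.continuousAt.eventually_lt_const (lt_add_one _)
    filter_upwards [hball] with s hs
    refine ae_of_all _ fun u ↦ (norm_cexp_inner_sub_one_le s u).trans ?_
    gcongr

theorem levyExponent_eq_charFun_sub (ρ : Measure E) [IsFiniteMeasure ρ] (t : E) :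
    levyExponent ρ t = charFun ρ t - ρ.real univ := by
  have hint : Integrable (fun u : E ↦ cexp (⟪u, t⟫ * I)) ρ :=
    .of_bound (by fun_prop) 1 (ae_of_all _ fun u ↦ (norm_exp_ofReal_mul_I _).le)
  rw [levyExponent, integral_sub hint (integrable_const 1), charFun_apply]
  simp

theorem tendsto_levyExponent_restrict_norm_gt {ν : Measure E}
    (hν : Integrable (fun u ↦ min 1 ‖u‖) ν) {r : ℕ → ℝ}
    (hr : Tendsto r atTop (𝓝 0)) (t : E) :
    Tendsto (fun n ↦ levyExponent (ν.restrict {u | r n < ‖u‖}) t) atTop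
      (𝓝 (levyExponent ν t)) := by
  have hmeas (n : ℕ) : MeasurableSet {u : E | r n < ‖u‖} :=
    measurableSet_lt measurable_const measurable_norm
  simp only [levyExponent, ← integral_indicator (hmeas _)]
  refine tendsto_integral_of_dominated_convergence (fun u ↦ (2 + ‖t‖) * min 1 ‖u‖)
    (fun n ↦ .indicator (by fun_prop) (hmeas n)) (hν.const_mul _)
    (fun n ↦ ae_of_all _ fun u ↦
      (norm_indicator_le_norm_self _ _).trans (norm_cexp_inner_sub_one_le t u))
    (ae_of_all _ fun u ↦ ?_)
  rcases eq_or_ne u 0 with rfl | hu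
  · simp [Set.indicator]
  · refine tendsto_const_nhds.congr' ?_
    filter_upwards [hr.eventually_lt_const (norm_pos_iff.2 hu)] with n hn
    rw [indicator_of_mem (s := {u | r n < ‖u‖}) hn]

variable [FiniteDimensional ℝ E]

-- The law is a compound Poisson law, obtained as the limit of the `n`-fold convolution powers of
-- the normalised measures `δ₀ + ρ / n`.
theorem isCharFun_cexp_levyExponent_of_isFiniteMeasure (ρ : Measure E) [IsFiniteMeasure ρ] :
    IsCharFun fun t ↦ cexp (levyExponent ρ t) := by
  let σ : ℕ → Measure E := fun n ↦ .dirac 0 + (n : ℝ≥0)⁻¹ • ρ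
  have hcharFun (n : ℕ) (t : E) : charFun (σ n) t = 1 + charFun ρ t / n := by
    have hint (τ : Measure E) [IsFiniteMeasure τ] : Integrable (fun u ↦ cexp (⟪u, t⟫ * I)) τ :=
      .of_bound (by fun_prop) 1 (ae_of_all _ fun u ↦ (norm_exp_ofReal_mul_I _).le)
    rw [charFun_apply, integral_add_measure (hint _) (hint _), ← charFun_apply, charFun_dirac,
      integral_smul_nnreal_measure, ← charFun_apply, NNReal.smul_def, Complex.real_smul]
    simp [div_eq_inv_mul]
  have hmass (n : ℕ) : ((σ n).real univ : ℂ) = 1 + ρ.real univ / n := by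
    simpa only [charFun_zero] using hcharFun n 0
  have hne (n : ℕ) : NeZero (σ n) :=
    ⟨fun h ↦ by simpa [σ] using DFunLike.congr_fun h univ⟩
  refine IsCharFun.of_tendsto (fun n ↦ (isCharFun_charFun_div (σ n)).pow n) ?_ fun t ↦ ?_
  · simp only [levyExponent_eq_charFun_sub]
    fun_prop
  · simp only [hcharFun, hmass, div_pow, levyExponent_eq_charFun_sub, Complex.exp_sub]
    exact (tendsto_one_add_div_pow_exp _).div (tendsto_one_add_div_pow_exp _) (exp_ne_zero _)

theorem isCharFun_cexp_levyExponent {ν : Measure E} (hν : Integrable (fun u ↦ min 1 ‖u‖) ν) :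
    IsCharFun fun t ↦ cexp (levyExponent ν t) := by
  let r : ℕ → ℝ := fun n ↦ 1 / ((n : ℝ) + 1)
  have hfin (n : ℕ) : IsFiniteMeasure (ν.restrict {u | r n < ‖u‖}) := by
    have hr : 0 < r n := Nat.one_div_pos_of_nat
    refine ⟨?_⟩
    rw [Measure.restrict_apply_univ]
    refine (measure_mono fun u hu ↦ ?_).trans_lt (hν.measure_ge_lt_top (lt_min one_pos hr))
    exact min_le_min_left 1 (show r n < ‖u‖ from hu).le
  refine IsCharFun.of_tendsto
    (fun n ↦ isCharFun_cexp_levyExponent_of_isFiniteMeasure (ν.restrict {u | r n < ‖u‖}))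
    (continuous_levyExponent hν).cexp.continuousAt fun t ↦ ?_
  exact (tendsto_levyExponent_restrict_norm_gt hν tendsto_one_div_add_atTop_nhds_zero_nat t).cexp

end LevyExponent

section Stable

variable {α m₁ m₂ β : ℝ}

/-- The density of the stable Lévy measure `nuStable α m₁ m₂` with respect to Lebesgue measure. -/
noncomputable def stableDensity (α m₁ m₂ u : ℝ) : ℝ :=
  if 0 < u then m₁ * u ^ (-α - 1) else if u < 0 then m₂ * |u| ^ (-α - 1) else 0

theorem nuStable_eq_withDensity (α m₁ m₂ : ℝ) :
    nuStable α m₁ m₂ = volume.withDensity fun u ↦ .ofReal (stableDensity α m₁ m₂ u) :=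
  rfl

@[fun_prop]
theorem measurable_stableDensity (α m₁ m₂ : ℝ) : Measurable (stableDensity α m₁ m₂) :=
  .ite measurableSet_Ioi (by fun_prop) (.ite measurableSet_Iio (by fun_prop) (by fun_prop))

theorem stableDensity_nonneg (hm₁ : 0 ≤ m₁) (hm₂ : 0 ≤ m₂) (u : ℝ) :
    0 ≤ stableDensity α m₁ m₂ u := by
  unfold stableDensity
  split_ifs <;> positivity

theorem stableDensity_le (hm₁ : 0 ≤ m₁) (hm₂ : 0 ≤ m₂) (u : ℝ) :
    stableDensity α m₁ m₂ u ≤ (m₁ + m₂) * |u| ^ (-α - 1) := by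
  unfold stableDensity
  split_ifs with hpos hneg
  · rw [abs_of_pos hpos]
    gcongr
    exact le_add_of_nonneg_right hm₂
  · gcongr
    exact le_add_of_nonneg_left hm₁
  · positivity

theorem stableDensity_mul {r : ℝ} (hr : 0 < r) (α m₁ m₂ u : ℝ) :
    stableDensity α m₁ m₂ (r * u) = r ^ (-α - 1) * stableDensity α m₁ m₂ u := by
  have hneg_iff : r * u < 0 ↔ u < 0 := by simp [mul_neg_iff, hr, hr.not_gt]
  simp only [stableDensity, mul_pos_iff_of_pos_left hr, hneg_iff, abs_mul, abs_of_pos hr]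
  split_ifs with hpos hneg
  · rw [Real.mul_rpow hr.le hpos.le, mul_left_comm]
  · rw [Real.mul_rpow hr.le (abs_nonneg u), mul_left_comm]
  · rw [mul_zero]

theorem integrable_abs_rpow_mul_min (hα : 0 < α) (hα1 : α < 1) :
    Integrable fun u : ℝ ↦ |u| ^ (-α - 1) * min 1 |u| := by
  have hnear : IntegrableOn (fun u : ℝ ↦ |u| ^ (-α - 1) * min 1 |u|) (Ioc 0 1) := by
    refine (intervalIntegral.intervalIntegrable_rpow' (r := -α) (by linarith)).1.congr_fun
      (fun u hu ↦ ?_) measurableSet_Ioc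
    simp only
    rw [abs_of_pos hu.1, min_eq_right hu.2, Real.rpow_sub_one hu.1.ne',
      div_mul_cancel₀ _ hu.1.ne']
  have hfar : IntegrableOn (fun u : ℝ ↦ |u| ^ (-α - 1) * min 1 |u|) (Ioi 1) := by
    refine (integrableOn_Ioi_rpow_of_lt (a := -α - 1) (by linarith) one_pos).congr_fun
      (fun u (hu : 1 < u) ↦ ?_) measurableSet_Ioi
    simp only
    rw [abs_of_pos (one_pos.trans hu), min_eq_left hu.le, mul_one]
  have hpos : IntegrableOn (fun u : ℝ ↦ |u| ^ (-α - 1) * min 1 |u|) (Ioi 0) := by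
    simpa only [Ioc_union_Ioi_eq_Ioi zero_le_one] using hnear.union hfar
  have hneg : IntegrableOn (fun u : ℝ ↦ |u| ^ (-α - 1) * min 1 |u|) (Iic 0) := by
    rw [integrableOn_Iic_iff_integrableOn_Iio]
    simpa using hpos.comp_neg
  rw [← integrableOn_univ, ← Iic_union_Ioi (a := (0 : ℝ))]
  exact hneg.union hpos

theorem integrable_min_one_norm_nuStable (hα : 0 < α) (hα1 : α < 1) (hm₁ : 0 ≤ m₁)
    (hm₂ : 0 ≤ m₂) : Integrable (fun u ↦ min 1 ‖u‖) (nuStable α m₁ m₂) := by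
  rw [nuStable_eq_withDensity, integrable_withDensity_iff_integrable_smul' (by fun_prop) (by simp)]
  refine ((integrable_abs_rpow_mul_min hα hα1).const_mul (m₁ + m₂)).mono' (by fun_prop)
    (ae_of_all _ fun u ↦ ?_)
  have hdens := stableDensity_nonneg (α := α) hm₁ hm₂ u
  rw [ENNReal.toReal_ofReal hdens, smul_eq_mul, Real.norm_eq_abs, Real.norm_eq_abs,
    abs_of_nonneg (by positivity), ← mul_assoc]
  gcongr
  exact stableDensity_le hm₁ hm₂ u

theorem map_mul_left_nuStable {r : ℝ} (hr : 0 < r) (α m₁ m₂ : ℝ) :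
    (nuStable α m₁ m₂).map (r * ·) = ENNReal.ofReal (r ^ α) • nuStable α m₁ m₂ := by
  ext s hs
  have hs' : MeasurableSet ((r * ·) ⁻¹' s) := measurable_const_mul r hs
  have hdensity (u : ℝ) :
      r ^ (α + 1) * stableDensity α m₁ m₂ (r * u) = stableDensity α m₁ m₂ u := by
    rw [stableDensity_mul hr, ← mul_assoc, ← Real.rpow_add hr]
    simp
  have hjacobian : ENNReal.ofReal (r ^ (α + 1)) * ENNReal.ofReal |r⁻¹| = .ofReal (r ^ α) := by
    rw [← ENNReal.ofReal_mul (by positivity), abs_of_pos (inv_pos.2 hr), Real.rpow_add_one hr.ne',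
      mul_inv_cancel_right₀ hr.ne']
  rw [Measure.map_apply (by fun_prop) hs, Measure.smul_apply, smul_eq_mul, nuStable_eq_withDensity,
    withDensity_apply _ hs, withDensity_apply _ hs']
  calc ∫⁻ u in (r * ·) ⁻¹' s, .ofReal (stableDensity α m₁ m₂ u)
    _ = ∫⁻ u in (r * ·) ⁻¹' s, .ofReal (r ^ (α + 1)) * .ofReal (stableDensity α m₁ m₂ (r * u)) := by
        simp only [← ENNReal.ofReal_mul (Real.rpow_nonneg hr.le _), hdensity]
    _ = .ofReal (r ^ (α + 1)) *
          ∫⁻ v in s, .ofReal (stableDensity α m₁ m₂ v) ∂(volume.map (r * ·)) := by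
        rw [lintegral_const_mul _ (by fun_prop),
          setLIntegral_map hs (by fun_prop) (by fun_prop)]
    _ = .ofReal (r ^ α) * ∫⁻ v in s, .ofReal (stableDensity α m₁ m₂ v) := by
        rw [Real.map_volume_mul_left hr.ne', Measure.restrict_smul, lintegral_smul_measure,
          smul_eq_mul, ← mul_assoc, hjacobian]

theorem levyExponent_nuStable_mul {r : ℝ} (hr : 0 < r) (α m₁ m₂ t : ℝ) :
    levyExponent (nuStable α m₁ m₂) (r * t) = (r ^ α : ℝ) * levyExponent (nuStable α m₁ m₂) t := by
  have hmap : levyExponent ((nuStable α m₁ m₂).map (r * ·)) t =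
      levyExponent (nuStable α m₁ m₂) (r * t) := by
    rw [levyExponent, integral_map (by fun_prop) (by fun_prop), levyExponent]
    simp [mul_left_comm, mul_comm]
  rw [← hmap, map_mul_left_nuStable hr, levyExponent_smul_measure,
    ENNReal.toReal_ofReal (by positivity)]

theorem psi01_eq_cexp (α m₁ m₂ β t : ℝ) :
    psi01 α m₁ m₂ β t = cexp (I * t * Gamma01 α m₁ m₂ β + levyExponent (nuStable α m₁ m₂) t) := by
  rw [psi01, levyExponent]
  congr! 6 with u
  simp only [RCLike.inner_apply, Real.ringHom_apply, ofReal_mul]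
  ring

theorem psi01_ne_zero (α m₁ m₂ β t : ℝ) : psi01 α m₁ m₂ β t ≠ 0 :=
  exp_ne_zero _

theorem isCharFun_psi01_div (hα : 0 < α) (hα1 : α < 1) (hm₁ : 0 ≤ m₁) (hm₂ : 0 ≤ m₂) {r : ℝ}
    (hr : 0 < r) (hr1 : r ≤ 1) :
    IsCharFun fun ξ ↦ psi01 α m₁ m₂ β ξ / psi01 α m₁ m₂ β (r * ξ) := by
  let c : ℝ≥0∞ := .ofReal (1 - r ^ α)
  have hc : c.toReal = 1 - r ^ α :=
    ENNReal.toReal_ofReal (sub_nonneg.2 (Real.rpow_le_one hr.le hr1 hα.le))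
  have hint : Integrable (fun u ↦ min 1 ‖u‖) (c • nuStable α m₁ m₂) :=
    (integrable_min_one_norm_nuStable hα hα1 hm₁ hm₂).smul_measure ENNReal.ofReal_ne_top
  convert (isCharFun_cexp_inner ((1 - r) * Gamma01 α m₁ m₂ β)).mul
    (isCharFun_cexp_levyExponent hint) using 2 with ξ
  rw [psi01_eq_cexp, psi01_eq_cexp, levyExponent_nuStable_mul hr, levyExponent_smul_measure, hc,
    ← Complex.exp_sub, ← Complex.exp_add]
  simp only [ofReal_mul, RCLike.inner_apply, Real.ringHom_apply, ofReal_sub, ofReal_one]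
  ring_nf

end Stable

section Fourier

theorem fourierT_eq_fourier (g : ℝ → ℂ) (ξ : ℝ) : fourierT g ξ = 𝓕 g (ξ / (2 * Real.pi)) := by
  rw [Real.fourier_real_eq_integral_exp_smul, fourierT]
  congr! 2 with x
  rw [smul_eq_mul, mul_comm]
  congr 2
  push_cast
  field_simp

theorem fourierT_comp_mul_left {a : ℝ} (ha : a ≠ 0) (g : ℝ → ℂ) (ξ : ℝ) :
    fourierT (fun x ↦ g (a * x)) ξ = |a⁻¹| * fourierT g (ξ / a) := by
  have hsubst := Measure.integral_comp_mul_left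
    (fun y : ℝ ↦ g y * cexp (-(I * y * (ξ / a : ℝ)))) a
  rw [Complex.real_smul] at hsubst
  rw [fourierT, fourierT, ← hsubst]
  have ha' : (a : ℂ) ≠ 0 := by exact_mod_cast ha
  congr! 4
  push_cast
  field_simp

theorem fourierT_comp_const_add (g : ℝ → ℂ) (u ξ : ℝ) :
    fourierT (fun y ↦ g (u + y)) ξ = cexp (ξ * u * I) * fourierT g ξ := by
  have hshift := integral_add_left_eq_self (μ := volume)
    (fun x : ℝ ↦ g x * cexp (-(I * (x - u : ℝ) * ξ))) u
  simp only [add_sub_cancel_left] at hshift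
  rw [fourierT, hshift, fourierT, ← integral_const_mul]
  congr! 2
  rw [mul_left_comm, ← Complex.exp_add]
  push_cast
  ring_nf

theorem inv_two_pi_mul_integral_fourierT {f : ℝ → ℂ} (hfc : Continuous f) (hf : Integrable f)
    (hf' : Integrable (fourierT f)) (y : ℝ) :
    (1 / (2 * Real.pi) : ℝ) * ∫ ξ, fourierT f ξ * cexp (I * ξ * y) = f y := by
  have hrescale (w : ℝ) : fourierT f (2 * Real.pi * w) = 𝓕 f w := by
    rw [fourierT_eq_fourier, mul_div_cancel_left₀ _ Real.two_pi_pos.ne']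
  have hint : Integrable (𝓕 f) := by
    simpa only [hrescale] using hf'.comp_mul_left' Real.two_pi_pos.ne'
  have hsubst := Measure.integral_comp_mul_left
    (fun ξ : ℝ ↦ fourierT f ξ * cexp (I * ξ * y)) (2 * Real.pi)
  rw [abs_of_pos (inv_pos.2 Real.two_pi_pos), Complex.real_smul, inv_eq_one_div] at hsubst
  rw [← hsubst, ← congr_fun (hfc.fourierInv_fourier_eq hf hint) y, Real.fourierInv_eq']
  congr! 2 with w
  rw [hrescale, smul_eq_mul, mul_comm]
  congr 2
  simp only [ofReal_mul, ofReal_ofNat, RCLike.inner_apply, Real.ringHom_apply]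
  ring

theorem integrable_fourierT (f : SchwartzMap ℝ ℂ) : Integrable (fourierT f) := by
  simpa only [fourierT_eq_fourier, ← SchwartzMap.fourier_coe, funext (fourierT_eq_fourier f)] using
    (𝓕 f).integrable.comp_div Real.two_pi_pos.ne'

end Fourier

section TranslateMean

/-- The mean `y ↦ 𝔼[f (U + y)]` of the translates of `f` by a random variable `U` of law `μ`. -/
noncomputable def translateMean (μ : Measure ℝ) (f : ℝ → ℂ) (y : ℝ) : ℂ :=
  ∫ u, f (u + y) ∂μ

variable {μ : Measure ℝ} [IsFiniteMeasure μ] {f : ℝ → ℂ}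

theorem integrable_translate_prod (hf : Integrable f) :
    Integrable (fun z : ℝ × ℝ ↦ f (z.1 + z.2)) (μ.prod volume) :=
  (measurePreserving_prod_add μ volume).integrable_comp_of_integrable (hf.comp_snd μ)

theorem integrable_translateMean (hf : Integrable f) : Integrable (translateMean μ f) :=
  (integrable_translate_prod hf).integral_prod_right

theorem fourierT_translateMean (hf : Integrable f) (ξ : ℝ) :
    fourierT (translateMean μ f) ξ = fourierT f ξ * charFun μ ξ := by
  have hint : Integrable (fun z : ℝ × ℝ ↦ f (z.1 + z.2) * cexp (-(I * z.2 * ξ)))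
      (μ.prod volume) := by
    refine (integrable_translate_prod hf).mul_bdd (c := 1) (by fun_prop)
      (ae_of_all _ fun z ↦ ?_)
    simp [Complex.norm_exp]
  calc fourierT (translateMean μ f) ξ
    _ = ∫ y, ∫ u, f (u + y) * cexp (-(I * y * ξ)) ∂μ := by
        simp only [fourierT, translateMean, integral_mul_const]
    _ = ∫ u, fourierT (fun y ↦ f (u + y)) ξ ∂μ := (integral_integral_swap hint).symm
    _ = fourierT f ξ * charFun μ ξ := by
        simp only [fourierT_comp_const_add, integral_mul_const, charFun_apply_real]
        rw [mul_comm]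

theorem inv_two_pi_mul_integral_fourierT_mul_charFun (hfc : Continuous f) (hf : Integrable f)
    (hf' : Integrable (fourierT f)) (y : ℝ) :
    (1 / (2 * Real.pi) : ℝ) * ∫ ξ, fourierT f ξ * cexp (I * ξ * y) * charFun μ ξ =
      translateMean μ f y := by
  have hint : Integrable (fun z : ℝ × ℝ ↦ fourierT f z.2 * cexp (I * z.2 * (z.1 + y : ℝ)))
      (μ.prod volume) := by
    refine (hf'.comp_snd μ).mul_bdd (c := 1) (by fun_prop) (ae_of_all _ fun z ↦ ?_)
    simp [Complex.norm_exp]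
  symm
  calc translateMean μ f y
    _ = ∫ u, (1 / (2 * Real.pi) : ℝ) * (∫ ξ, fourierT f ξ * cexp (I * ξ * (u + y : ℝ))) ∂μ := by
        simp only [translateMean, inv_two_pi_mul_integral_fourierT hfc hf hf']
    _ = (1 / (2 * Real.pi) : ℝ) * ∫ ξ, (∫ u, fourierT f ξ * cexp (I * ξ * (u + y : ℝ)) ∂μ) := by
        rw [integral_const_mul, integral_integral_swap hint]
    _ = (1 / (2 * Real.pi) : ℝ) * ∫ ξ, fourierT f ξ * cexp (I * ξ * y) * charFun μ ξ := by
        congr! 3 with ξ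
        rw [charFun_apply_real, ← integral_const_mul]
        congr! 2
        rw [mul_assoc (fourierT f ξ), ← Complex.exp_add]
        push_cast
        ring_nf

end TranslateMean

section Pt

variable {α m₁ m₂ β : ℝ} {f : ℝ → ℂ}

theorem Pt_eq_translateMean {μ : Measure ℝ} [IsFiniteMeasure μ] {s : ℝ}
    (hμ : charFun μ = fun ξ ↦ psi01 α m₁ m₂ β ξ / psi01 α m₁ m₂ β (Real.exp (-s) * ξ))
    (hfc : Continuous f) (hf : Integrable f) (hf' : Integrable (fourierT f)) :
    Pt α m₁ m₂ β s f = fun x ↦ translateMean μ f (Real.exp (-s) * x) := by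
  ext x
  rw [Pt, ← inv_two_pi_mul_integral_fourierT_mul_charFun hfc hf hf', hμ]
  congr! 3 with ξ
  rw [mul_div_assoc]
  congr 3
  push_cast
  ring

theorem exists_Pt_eq_translateMean (hα : 0 < α) (hα1 : α < 1) (hm₁ : 0 ≤ m₁) (hm₂ : 0 ≤ m₂)
    (hfc : Continuous f) (hf : Integrable f) (hf' : Integrable (fourierT f)) {s : ℝ}
    (hs : 0 ≤ s) :
    ∃ μ : ProbabilityMeasure ℝ,
      (charFun μ = fun ξ ↦ psi01 α m₁ m₂ β ξ / psi01 α m₁ m₂ β (Real.exp (-s) * ξ)) ∧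
      Pt α m₁ m₂ β s f = fun x ↦ translateMean μ f (Real.exp (-s) * x) := by
  have hexp : Real.exp (-s) ≤ 1 := Real.exp_le_one_iff.2 (neg_nonpos.2 hs)
  obtain ⟨μ, hμ⟩ := isCharFun_psi01_div (β := β) hα hα1 hm₁ hm₂ (Real.exp_pos (-s)) hexp
  exact ⟨μ, hμ, Pt_eq_translateMean hμ hfc hf hf'⟩

theorem Pt_zero (hfc : Continuous f) (hf : Integrable f) (hf' : Integrable (fourierT f)) (x : ℝ) :
    Pt α m₁ m₂ β 0 f x = f x := by
  simpa [Pt, psi01_ne_zero] using inv_two_pi_mul_integral_fourierT hfc hf hf' x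

theorem integrable_Pt (hα : 0 < α) (hα1 : α < 1) (hm₁ : 0 ≤ m₁) (hm₂ : 0 ≤ m₂)
    (hfc : Continuous f) (hf : Integrable f) (hf' : Integrable (fourierT f)) {s : ℝ}
    (hs : 0 ≤ s) : Integrable (Pt α m₁ m₂ β s f) := by
  obtain ⟨μ, -, hPt⟩ := exists_Pt_eq_translateMean (β := β) hα hα1 hm₁ hm₂ hfc hf hf' hs
  rw [hPt]
  exact (integrable_translateMean hf).comp_mul_left' (Real.exp_ne_zero _)

theorem fourierT_Pt (hα : 0 < α) (hα1 : α < 1) (hm₁ : 0 ≤ m₁) (hm₂ : 0 ≤ m₂)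
    (hfc : Continuous f) (hf : Integrable f) (hf' : Integrable (fourierT f)) {s : ℝ}
    (hs : 0 ≤ s) (ξ : ℝ) :
    fourierT (Pt α m₁ m₂ β s f) ξ =
      Real.exp s * fourierT f (Real.exp s * ξ) * psi01 α m₁ m₂ β (Real.exp s * ξ) /
        psi01 α m₁ m₂ β ξ := by
  obtain ⟨μ, hμ, hPt⟩ := exists_Pt_eq_translateMean (β := β) hα hα1 hm₁ hm₂ hfc hf hf' hs
  have hcancel : Real.exp (-s) * (Real.exp s * ξ) = ξ := by
    rw [← mul_assoc, ← Real.exp_add, neg_add_cancel, Real.exp_zero, one_mul]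
  calc fourierT (Pt α m₁ m₂ β s f) ξ
    _ = Real.exp s * fourierT (translateMean μ f) (Real.exp s * ξ) := by
        rw [hPt, fourierT_comp_mul_left (Real.exp_ne_zero _), ← Real.exp_neg, neg_neg,
          abs_of_pos (Real.exp_pos s), Real.exp_neg, div_inv_eq_mul, mul_comm ξ]
    _ = Real.exp s * (fourierT f (Real.exp s * ξ) *
          (psi01 α m₁ m₂ β (Real.exp s * ξ) / psi01 α m₁ m₂ β ξ)) := by
        rw [fourierT_translateMean hf, hμ]
        simp only [hcancel]
    _ = _ := by ring

theorem Pt_Pt (hα : 0 < α) (hα1 : α < 1) (hm₁ : 0 ≤ m₁) (hm₂ : 0 ≤ m₂)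
    (hfc : Continuous f) (hf : Integrable f) (hf' : Integrable (fourierT f)) {s : ℝ}
    (hs : 0 ≤ s) (t x : ℝ) :
    Pt α m₁ m₂ β t (Pt α m₁ m₂ β s f) x = Pt α m₁ m₂ β (t + s) f x := by
  have hexp : Real.exp (-(t + s)) * Real.exp s = Real.exp (-t) := by
    rw [← Real.exp_add]
    ring_nf
  let F : ℝ → ℂ := fun η ↦ fourierT f η * cexp (I * η * x * (Real.exp (-(t + s)) : ℝ)) *
    psi01 α m₁ m₂ β η / psi01 α m₁ m₂ β (Real.exp (-(t + s)) * η)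
  have hF (ξ : ℝ) : fourierT (Pt α m₁ m₂ β s f) ξ * cexp (I * ξ * x * (Real.exp (-t) : ℝ)) *
      psi01 α m₁ m₂ β ξ / psi01 α m₁ m₂ β (Real.exp (-t) * ξ) =
        Real.exp s * F (Real.exp s * ξ) := by
    have hphase : I * (Real.exp s * ξ : ℝ) * x * (Real.exp (-(t + s)) : ℝ) =
        I * ξ * x * (Real.exp (-t) : ℝ) := by
      rw [← hexp]
      push_cast
      ring
    have hψ := psi01_ne_zero α m₁ m₂ β ξ
    simp only [F]
    rw [fourierT_Pt hα hα1 hm₁ hm₂ hfc hf hf' hs, ← mul_assoc (Real.exp (-(t + s))), hexp, hphase]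
    field_simp
  calc Pt α m₁ m₂ β t (Pt α m₁ m₂ β s f) x
    _ = (1 / (2 * Real.pi) : ℝ) * ∫ ξ, Real.exp s * F (Real.exp s * ξ) := by
        simp only [Pt, ← hF]
    _ = (1 / (2 * Real.pi) : ℝ) * ∫ η, F η := by
        rw [integral_const_mul, Measure.integral_comp_mul_left, abs_of_pos (by positivity),
          Complex.real_smul, ← mul_assoc (Real.exp s : ℂ), ← ofReal_mul,
          mul_inv_cancel₀ (Real.exp_ne_zero s), ofReal_one, one_mul]
    _ = Pt α m₁ m₂ β (t + s) f x := rfl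

end Pt

theorem stmt_11_general {α m₁ m₂ β : ℝ} (hα : 0 < α) (hα1 : α < 1) (hm₁ : 0 ≤ m₁)
    (hm₂ : 0 ≤ m₂) {f : ℝ → ℂ} (hfc : Continuous f) (hf : Integrable f)
    (hf' : Integrable (fourierT f)) :
    (∀ x, Pt α m₁ m₂ β 0 f x = f x) ∧
    (∀ s, 0 ≤ s →
      Integrable (Pt α m₁ m₂ β s f) ∧
      ∀ ξ, fourierT (Pt α m₁ m₂ β s f) ξ =
        Real.exp s * fourierT f (Real.exp s * ξ) * psi01 α m₁ m₂ β (Real.exp s * ξ) /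
          psi01 α m₁ m₂ β ξ) ∧
    (∀ s, 0 ≤ s → ∀ t, 0 ≤ t → ∀ x,
      Pt α m₁ m₂ β t (Pt α m₁ m₂ β s f) x = Pt α m₁ m₂ β (t + s) f x) :=
  ⟨Pt_zero hfc hf hf',
    fun _ hs ↦ ⟨integrable_Pt hα hα1 hm₁ hm₂ hfc hf hf' hs,
      fourierT_Pt hα hα1 hm₁ hm₂ hfc hf hf' hs⟩,
    fun _ hs t _ x ↦ Pt_Pt hα hα1 hm₁ hm₂ hfc hf hf' hs t x⟩

end StableSemigroup

theorem stmt_11 (α m₁ m₂ β : ℝ) (hα : 0 < α) (hα1 : α < 1)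
    (hm₁ : 0 ≤ m₁) (hm₂ : 0 ≤ m₂) (hm : 0 < m₁ + m₂)
    (f : SchwartzMap ℝ ℂ) :
    (∀ x : ℝ, Pt α m₁ m₂ β 0 (⇑f) x = f x) ∧
    (∀ s : ℝ, 0 ≤ s →
      Integrable (Pt α m₁ m₂ β s (⇑f)) (volume : Measure ℝ) ∧
      ∀ ξ : ℝ, fourierT (Pt α m₁ m₂ β s (⇑f)) ξ =
        ((Real.exp s : ℝ) : ℂ) * fourierT (⇑f) (Real.exp s * ξ) *
          psi01 α m₁ m₂ β (Real.exp s * ξ) / psi01 α m₁ m₂ β ξ) ∧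
    (∀ s : ℝ, 0 ≤ s → ∀ t : ℝ, 0 ≤ t → ∀ x : ℝ,
      ((1 / (2 * Real.pi) : ℝ) : ℂ) *
        (∫ ξ : ℝ, fourierT (Pt α m₁ m₂ β s (⇑f)) ξ *
          Complex.exp (Complex.I * ξ * x * ((Real.exp (-t) : ℝ) : ℂ)) *
          psi01 α m₁ m₂ β ξ / psi01 α m₁ m₂ β (Real.exp (-t) * ξ)) =
        Pt α m₁ m₂ β (t + s) (⇑f) x) :=
  stmt_11_general hα hα1 hm₁ hm₂ f.continuous f.integrable (integrable_fourierT f)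
end

section
/- (First- and second-derivative bounds for the Stein solution, α ∈ (1,2).) Let α ∈ (1,2), m₁, m₂ ∈ [0,∞) with m₁ + m₂ > 0, β ∈ ℝ. Let μ be a Borel probability measure on ℝ with characteristic function ψ_α, and for each t > 0 let μ_t be a Borel probability measure on ℝ with characteristic function ξ ↦ ψ_α(ξ)/ψ_α(e^{-t}ξ). Let h : ℝ → ℝ be bounded and twice differentiable with sup_x |h(x)| ≤ 1, sup_x |h'(x)| ≤ 1 and sup_x |h''(x)| ≤ 1. Assume h is μ-integrable and that for every x ∈ ℝ the function t ↦ ∫_ℝ h(y + e^{-t}x) dμ_t(y) - ∫_ℝ h dμ is Lebesgue integrable on (0,∞), and set f_h(x) = -∫₀^∞ (∫_ℝ h(y + e^{-t}x) dμ_t(y) - ∫_ℝ h dμ) dt. Then f_h is twice differentiable on ℝ, sup_x |f_h'(x)| ≤ sup_x |h'(x)|, and sup_x |f_h''(x)| ≤ (1/2) sup_x |h''(x)|. -/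
open MeasureTheory

/-- Location parameter for `α ∈ [1,2)`:
`Γ_α = β + 2(m₁-m₂)∫₀^1 u^{2-α}(1+u²)^{-1} du - (m₁-m₂)∫₀^∞ min(1,u²) u^{-α}(1+u²)^{-1} du`. -/
noncomputable def Gamma12 (α m₁ m₂ β : ℝ) : ℝ :=
  β + 2 * (m₁ - m₂) * (∫ u in Set.Ioc (0 : ℝ) 1, u ^ (2 - α) / (1 + u ^ 2)) -
    (m₁ - m₂) * ∫ u in Set.Ioi (0 : ℝ), min 1 (u ^ 2) * u ^ (-α) / (1 + u ^ 2)

/-- Characteristic function of the `α`-stable law, `α ∈ [1,2)`: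
`ψ_α(t) = exp(itΓ_α + ∫_ℝ (e^{itu} - 1 - itu·1_{|u|≤1}) ν_α(du))`. -/
noncomputable def psi12 (α m₁ m₂ β : ℝ) (t : ℝ) : ℂ :=
  Complex.exp (Complex.I * t * (Gamma12 α m₁ m₂ β) +
    ∫ u : ℝ, (Complex.exp (Complex.I * t * u) - 1 -
      (if |u| ≤ 1 then Complex.I * t * u else 0)) ∂(nuStable α m₁ m₂))

/-!
Differentiating `∫ h(y + e^{-t} x) dμ_t(y)` in `x` brings out one factor `e^{-t}` per derivative, so
the `k`-th derivative is bounded by `e^{-kt} sup |h⁽ᵏ⁾|`, uniformly in `x`. This majorant is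
integrable in `t`, which justifies differentiating under `∫₀^∞ dt`, and `∫₀^∞ e^{-kt} dt = 1/k`
gives the constants `1` and `1/2`. As `t ↦ μ_t` is an arbitrary family of measures rather than a
kernel, measurability in `t` of the derivatives has to be inherited from the difference quotients.
-/

open Filter Set Topology

section DominatedDifferentiation

variable {Ω 𝕜 F : Type*} [MeasurableSpace Ω] {ρ : Measure Ω} [NormedAddCommGroup F]

lemma aestronglyMeasurable_of_hasDerivAt [NontriviallyNormedField 𝕜] [NormedSpace 𝕜 F]
    {f : 𝕜 → Ω → F} {f' : Ω → F} {x : 𝕜} (hf : ∀ z, AEStronglyMeasurable (f z) ρ)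
    (hderiv : ∀ᵐ ω ∂ρ, HasDerivAt (f · ω) (f' ω) x) : AEStronglyMeasurable f' ρ :=
  aestronglyMeasurable_of_tendsto_ae (𝓝[≠] (0 : 𝕜))
    (f := fun s ω ↦ s⁻¹ • (f (x + s) ω - f x ω))
    (fun s ↦ ((hf (x + s)).sub (hf x)).const_smul s⁻¹)
    (hderiv.mono fun _ hω ↦ hω.tendsto_slope_zero)

lemma integrable_and_hasDerivAt_integral_of_dominated [RCLike 𝕜] [NormedSpace ℝ F]
    [NormedSpace 𝕜 F] {f f' : 𝕜 → Ω → F} {bound : Ω → ℝ} {x : 𝕜}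
    (hf_meas : ∀ z, AEStronglyMeasurable (f z) ρ) (hf_int : Integrable (f x) ρ)
    (hderiv : ∀ᵐ ω ∂ρ, ∀ z, HasDerivAt (f · ω) (f' z ω) z)
    (hle : ∀ᵐ ω ∂ρ, ∀ z, ‖f' z ω‖ ≤ bound ω) (hbound : Integrable bound ρ) :
    Integrable (f' x) ρ ∧ HasDerivAt (fun z ↦ ∫ ω, f z ω ∂ρ) (∫ ω, f' x ω ∂ρ) x :=
  hasDerivAt_integral_of_dominated_loc_of_deriv_le univ_mem (.of_forall hf_meas) hf_int
    (aestronglyMeasurable_of_hasDerivAt hf_meas (hderiv.mono fun _ hω ↦ hω x))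
    (hle.mono fun _ hω z _ ↦ hω z) hbound (hderiv.mono fun _ hω z _ ↦ hω z)

end DominatedDifferentiation

section Translates

lemma integrable_comp_add_right_of_lipschitzWith {E F : Type*} [SeminormedAddCommGroup E]
    [MeasurableSpace E] [BorelSpace E] [NormedAddCommGroup F] [SecondCountableTopologyEither E F]
    {κ : Measure E} [IsFiniteMeasure κ] {K : NNReal} {g : E → F} (hg : LipschitzWith K g)
    (hg_int : Integrable g κ) (v : E) : Integrable (fun y ↦ g (y + v)) κ := by
  refine (hg_int.norm.add (integrable_const (K * ‖v‖))).mono'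
    (hg.continuous.comp (continuous_add_const v)).aestronglyMeasurable (.of_forall fun y ↦ ?_)
  have hdist : ‖g (y + v) - g y‖ ≤ K * ‖v‖ := by simpa using hg.norm_sub_le (y + v) y
  exact (norm_le_norm_add_norm_sub' _ _).trans (add_le_add_right hdist _)

variable {F : Type*} [NormedAddCommGroup F] [NormedSpace ℝ F] {C : ℝ}

lemma norm_integral_comp_add_right_le {E : Type*} [Add E] [MeasurableSpace E] {κ : Measure E}
    [IsProbabilityMeasure κ] {g : E → F} (hC : ∀ y, ‖g y‖ ≤ C) (v : E) :
    ‖∫ y, g (y + v) ∂κ‖ ≤ C := by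
  simpa using norm_integral_le_of_norm_le_const (μ := κ) (.of_forall fun y ↦ hC (y + v))

lemma hasDerivAt_integral_comp_add_mul {κ : Measure ℝ} [IsFiniteMeasure κ] {g : ℝ → F}
    (hg : Differentiable ℝ g) (hg_int : Integrable g κ) (hC : ∀ y, ‖deriv g y‖ ≤ C) (c x : ℝ) :
    HasDerivAt (fun z ↦ ∫ y, g (y + c * z) ∂κ) (c • ∫ y, deriv g (y + c * x) ∂κ) x := by
  have hg_lip : LipschitzWith C.toNNReal g :=
    lipschitzWith_of_nnnorm_deriv_le hg fun y ↦ NNReal.le_toNNReal_of_coe_le (hC y)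
  have hint (z : ℝ) : Integrable (fun y ↦ g (y + c * z)) κ :=
    integrable_comp_add_right_of_lipschitzWith hg_lip hg_int (c * z)
  have hderiv (y z : ℝ) : HasDerivAt (fun z ↦ g (y + c * z)) (c • deriv g (y + c * z)) z :=
    (hg (y + c * z)).hasDerivAt.scomp z ((hasDerivAt_const_mul c).const_add y)
  have hle (y z : ℝ) : ‖c • deriv g (y + c * z)‖ ≤ ‖c‖ * C := by
    rw [norm_smul]
    gcongr
    exact hC _
  rw [← integral_smul]
  exact (integrable_and_hasDerivAt_integral_of_dominated
    (fun z ↦ (hint z).aestronglyMeasurable) (hint x) (.of_forall hderiv)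
    (.of_forall hle) (integrable_const _)).2

end Translates

section Mixtures

variable {Ω F : Type*} [MeasurableSpace Ω] {ρ : Measure Ω} [NormedAddCommGroup F]
  [NormedSpace ℝ F] {C : ℝ} {w : Ω → ℝ}

lemma norm_integral_smul_integral_comp_add_right_le {E : Type*} [Add E] [MeasurableSpace E]
    {κ : Ω → Measure E} {g : E → F} (hκ : ∀ᵐ ω ∂ρ, IsProbabilityMeasure (κ ω))
    (hC : ∀ y, ‖g y‖ ≤ C) (hw : Integrable w ρ) (v : Ω → E) :
    ‖∫ ω, w ω • ∫ y, g (y + v ω) ∂κ ω ∂ρ‖ ≤ (∫ ω, ‖w ω‖ ∂ρ) * C := by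
  rw [← integral_mul_const]
  refine norm_integral_le_of_norm_le (hw.norm.mul_const C) (hκ.mono fun ω hω ↦ ?_)
  rw [norm_smul]
  gcongr
  exact norm_integral_comp_add_right_le hC (v ω)

lemma integrable_and_hasDerivAt_integral_smul_integral_comp_add_mul {κ : Ω → Measure ℝ}
    {c : Ω → ℝ} {g : ℝ → F} {a : Ω → F} (hκ : ∀ᵐ ω ∂ρ, IsProbabilityMeasure (κ ω))
    (hg : Differentiable ℝ g) (hg_int : ∀ᵐ ω ∂ρ, Integrable g (κ ω))
    (hC : ∀ y, ‖deriv g y‖ ≤ C) (hwc : Integrable (fun ω ↦ w ω * c ω) ρ)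
    (hint : ∀ x, Integrable (fun ω ↦ (w ω • ∫ y, g (y + c ω * x) ∂κ ω) - a ω) ρ) (x : ℝ) :
    Integrable (fun ω ↦ (w ω * c ω) • ∫ y, deriv g (y + c ω * x) ∂κ ω) ρ ∧
      HasDerivAt (fun z ↦ ∫ ω, ((w ω • ∫ y, g (y + c ω * z) ∂κ ω) - a ω) ∂ρ)
        (∫ ω, (w ω * c ω) • ∫ y, deriv g (y + c ω * x) ∂κ ω ∂ρ) x := by
  have hderiv : ∀ᵐ ω ∂ρ, ∀ z, HasDerivAt (fun z ↦ (w ω • ∫ y, g (y + c ω * z) ∂κ ω) - a ω)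
      ((w ω * c ω) • ∫ y, deriv g (y + c ω * z) ∂κ ω) z := by
    filter_upwards [hκ, hg_int] with ω _ hω z
    rw [mul_smul]
    exact ((hasDerivAt_integral_comp_add_mul hg hω hC (c ω) z).const_smul (w ω)).sub_const (a ω)
  have hle : ∀ᵐ ω ∂ρ, ∀ z,
      ‖(w ω * c ω) • ∫ y, deriv g (y + c ω * z) ∂κ ω‖ ≤ ‖w ω * c ω‖ * C := by
    filter_upwards [hκ] with ω _ z
    rw [norm_smul]
    gcongr
    exact norm_integral_comp_add_right_le hC (c ω * z)
  exact integrable_and_hasDerivAt_integral_of_dominated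
    (fun z ↦ (hint z).aestronglyMeasurable) (hint x) hderiv hle (hwc.norm.mul_const C)

end Mixtures

section SteinSolution

variable {F : Type*} [NormedAddCommGroup F] [NormedSpace ℝ F] {κ : ℝ → Measure ℝ} {a : F}
  {h : ℝ → F}

/-- The solution `f_h(x) = -∫₀^∞ (∫ h(y + e^{-t} x) dκ_t(y) - a) dt` of the Stein equation for the
Ornstein–Uhlenbeck type semigroup `P_t h(x) = ∫ h(y + e^{-t} x) dκ_t(y)`. The constant `a` stands
for the mean of `h` under the invariant law. -/
noncomputable def steinSolution (κ : ℝ → Measure ℝ) (a : F) (h : ℝ → F) (x : ℝ) : F :=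
  -∫ t in Ioi (0 : ℝ), ((∫ y, h (y + Real.exp (-t) * x) ∂κ t) - a)

section Derivatives

variable {C₁ : ℝ} (hκ : ∀ t, 0 < t → IsProbabilityMeasure (κ t)) (hh : Differentiable ℝ h)
  (hh_int : ∀ t, 0 < t → Integrable h (κ t)) (hC₁ : ∀ y, ‖deriv h y‖ ≤ C₁)
  (hint : ∀ x, IntegrableOn (fun t ↦ (∫ y, h (y + Real.exp (-t) * x) ∂κ t) - a) (Ioi 0))
include hκ hh hh_int hC₁ hint

lemma integrableOn_and_hasDerivAt_steinSolution (x : ℝ) :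
    IntegrableOn (fun t ↦ Real.exp (-t) • ∫ y, deriv h (y + Real.exp (-t) * x) ∂κ t) (Ioi 0) ∧
      HasDerivAt (steinSolution κ a h)
        (-∫ t in Ioi 0, Real.exp (-t) • ∫ y, deriv h (y + Real.exp (-t) * x) ∂κ t) x := by
  have hmix := integrable_and_hasDerivAt_integral_smul_integral_comp_add_mul (w := fun _ ↦ 1)
    (c := fun t ↦ Real.exp (-t)) (a := fun _ ↦ a) (ae_restrict_of_forall_mem measurableSet_Ioi hκ)
    hh (ae_restrict_of_forall_mem measurableSet_Ioi hh_int) hC₁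
    (by simpa only [one_mul, IntegrableOn] using integrableOn_exp_neg_Ioi 0)
    (by simpa only [one_smul, IntegrableOn] using hint) x
  simp only [one_mul, one_smul] at hmix
  exact ⟨hmix.1, hmix.2.fun_neg⟩

lemma deriv_steinSolution : deriv (steinSolution κ a h) =
    fun x ↦ -∫ t in Ioi 0, Real.exp (-t) • ∫ y, deriv h (y + Real.exp (-t) * x) ∂κ t :=
  funext fun x ↦ (integrableOn_and_hasDerivAt_steinSolution hκ hh hh_int hC₁ hint x).2.deriv

lemma hasDerivAt_deriv_steinSolution {C₂ : ℝ} (hh' : Differentiable ℝ (deriv h))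
    (hC₂ : ∀ y, ‖deriv (deriv h) y‖ ≤ C₂) (x : ℝ) :
    HasDerivAt (deriv (steinSolution κ a h))
      (-∫ t in Ioi 0, Real.exp (-2 * t) •
        ∫ y, deriv (deriv h) (y + Real.exp (-t) * x) ∂κ t) x := by
  have hexp (t : ℝ) : Real.exp (-t) * Real.exp (-t) = Real.exp (-2 * t) := by
    rw [← Real.exp_add]
    ring_nf
  have hexp_int : IntegrableOn (fun t : ℝ ↦ Real.exp (-2 * t)) (Ioi 0) :=
    integrableOn_exp_mul_Ioi (by norm_num) 0
  have hh'_int (t : ℝ) (ht : 0 < t) : Integrable (deriv h) (κ t) :=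
    have := hκ t ht
    .of_bound hh'.continuous.aestronglyMeasurable C₁ (.of_forall hC₁)
  have hint' (x : ℝ) :=
    (integrableOn_and_hasDerivAt_steinSolution hκ hh hh_int hC₁ hint x).1
  have hmix := (integrable_and_hasDerivAt_integral_smul_integral_comp_add_mul
    (w := fun t ↦ Real.exp (-t)) (c := fun t ↦ Real.exp (-t)) (a := fun _ ↦ (0 : F))
    (ae_restrict_of_forall_mem measurableSet_Ioi hκ) hh'
    (ae_restrict_of_forall_mem measurableSet_Ioi hh'_int) hC₂
    (by simpa only [hexp, IntegrableOn] using hexp_int)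
    (by simpa only [sub_zero, IntegrableOn] using hint') x).2
  rw [deriv_steinSolution hκ hh hh_int hC₁ hint]
  simp only [sub_zero, hexp] at hmix
  exact hmix.fun_neg

lemma norm_deriv_steinSolution_le (x : ℝ) : ‖deriv (steinSolution κ a h) x‖ ≤ C₁ := by
  rw [deriv_steinSolution hκ hh hh_int hC₁ hint, norm_neg]
  simpa only [Real.norm_eq_abs, Real.abs_exp, integral_exp_neg_Ioi_zero, one_mul] using
    norm_integral_smul_integral_comp_add_right_le
      (ae_restrict_of_forall_mem measurableSet_Ioi hκ) hC₁ (integrableOn_exp_neg_Ioi 0)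
      fun t ↦ Real.exp (-t) * x

lemma norm_deriv_deriv_steinSolution_le {C₂ : ℝ} (hh' : Differentiable ℝ (deriv h))
    (hC₂ : ∀ y, ‖deriv (deriv h) y‖ ≤ C₂) (x : ℝ) :
    ‖deriv (deriv (steinSolution κ a h)) x‖ ≤ 1 / 2 * C₂ := by
  have hexp : ∫ t in Ioi (0 : ℝ), Real.exp (-2 * t) = 1 / 2 := by
    rw [integral_exp_mul_Ioi (by norm_num)]
    norm_num
  rw [(hasDerivAt_deriv_steinSolution hκ hh hh_int hC₁ hint hh' hC₂ x).deriv, norm_neg]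
  simpa only [Real.norm_eq_abs, Real.abs_exp, hexp] using
    norm_integral_smul_integral_comp_add_right_le
      (ae_restrict_of_forall_mem measurableSet_Ioi hκ) hC₂
      (integrableOn_exp_mul_Ioi (by norm_num : (-2 : ℝ) < 0) 0) fun t ↦ Real.exp (-t) * x

end Derivatives

theorem stmt_15_general (hκ : ∀ t, 0 < t → IsProbabilityMeasure (κ t))
    (hh : Differentiable ℝ h) (hh' : Differentiable ℝ (deriv h))
    (hh_int : ∀ t, 0 < t → Integrable h (κ t))
    (hbdd : BddAbove (range fun y ↦ ‖deriv h y‖))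
    (hbdd' : BddAbove (range fun y ↦ ‖deriv (deriv h) y‖))
    (hint : ∀ x, IntegrableOn (fun t ↦ (∫ y, h (y + Real.exp (-t) * x) ∂κ t) - a) (Ioi 0)) :
    Differentiable ℝ (steinSolution κ a h) ∧ Differentiable ℝ (deriv (steinSolution κ a h)) ∧
      (∀ x, ‖deriv (steinSolution κ a h) x‖ ≤ ⨆ y, ‖deriv h y‖) ∧
      ∀ x, ‖deriv (deriv (steinSolution κ a h)) x‖ ≤ 1 / 2 * ⨆ y, ‖deriv (deriv h) y‖ := by
  have hC₁ := le_ciSup hbdd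
  have hC₂ := le_ciSup hbdd'
  refine ⟨fun x ↦ ?_, fun x ↦ ?_, ?_, ?_⟩
  · exact (integrableOn_and_hasDerivAt_steinSolution hκ hh hh_int hC₁ hint x).2.differentiableAt
  · exact (hasDerivAt_deriv_steinSolution hκ hh hh_int hC₁ hint hh' hC₂ x).differentiableAt
  · exact norm_deriv_steinSolution_le hκ hh hh_int hC₁ hint
  · exact norm_deriv_deriv_steinSolution_le hκ hh hh_int hC₁ hint hh' hC₂

end SteinSolution

theorem stmt_15 (α m₁ m₂ β : ℝ) (hα : 1 < α) (hα2 : α < 2)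
    (hm₁ : 0 ≤ m₁) (hm₂ : 0 ≤ m₂) (hm : 0 < m₁ + m₂)
    (μ : Measure ℝ) [IsProbabilityMeasure μ]
    (hμ : ∀ t : ℝ, ∫ x : ℝ, Complex.exp (Complex.I * t * x) ∂μ = psi12 α m₁ m₂ β t)
    (μt : ℝ → Measure ℝ) (hP : ∀ t : ℝ, 0 < t → IsProbabilityMeasure (μt t))
    (hμt : ∀ t : ℝ, 0 < t → ∀ ξ : ℝ,
      ∫ x : ℝ, Complex.exp (Complex.I * ξ * x) ∂(μt t) =
        psi12 α m₁ m₂ β ξ / psi12 α m₁ m₂ β (Real.exp (-t) * ξ))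
    (h : ℝ → ℝ) (hdiff : Differentiable ℝ h) (hdiff2 : Differentiable ℝ (deriv h))
    (hb0 : ∀ x : ℝ, |h x| ≤ 1) (hb1 : ∀ x : ℝ, |deriv h x| ≤ 1)
    (hb2 : ∀ x : ℝ, |deriv (deriv h) x| ≤ 1)
    (hint : Integrable h μ)
    (hint2 : ∀ x : ℝ, IntegrableOn
      (fun t : ℝ => (∫ y : ℝ, h (y + Real.exp (-t) * x) ∂(μt t)) - ∫ y : ℝ, h y ∂μ)
      (Set.Ioi 0)) :
    Differentiable ℝ (fun x : ℝ => -∫ t in Set.Ioi (0 : ℝ),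
        ((∫ y : ℝ, h (y + Real.exp (-t) * x) ∂(μt t)) - ∫ y : ℝ, h y ∂μ)) ∧
    Differentiable ℝ (deriv (fun x : ℝ => -∫ t in Set.Ioi (0 : ℝ),
        ((∫ y : ℝ, h (y + Real.exp (-t) * x) ∂(μt t)) - ∫ y : ℝ, h y ∂μ))) ∧
    (∀ x : ℝ, |deriv (fun x : ℝ => -∫ t in Set.Ioi (0 : ℝ),
        ((∫ y : ℝ, h (y + Real.exp (-t) * x) ∂(μt t)) - ∫ y : ℝ, h y ∂μ)) x| ≤
      ⨆ y : ℝ, |deriv h y|) ∧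
    ∀ x : ℝ, |deriv (deriv (fun x : ℝ => -∫ t in Set.Ioi (0 : ℝ),
        ((∫ y : ℝ, h (y + Real.exp (-t) * x) ∂(μt t)) - ∫ y : ℝ, h y ∂μ))) x| ≤
      (1 / 2) * ⨆ y : ℝ, |deriv (deriv h) y| := by
  have hh_int (t : ℝ) (ht : 0 < t) : Integrable h (μt t) :=
    have := hP t ht
    .of_bound hdiff.continuous.aestronglyMeasurable 1 (.of_forall hb0)
  exact stmt_15_general hP hdiff hdiff2 hh_int ⟨1, forall_mem_range.2 hb1⟩
    ⟨1, forall_mem_range.2 hb2⟩ hint2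
end

section
/- (Kernel decomposition of the compensated stable integral.) Let α ∈ (1,2), m₁, m₂ ∈ [0,∞) with m₁ + m₂ > 0, and let f : ℝ → ℝ be twice continuously differentiable with sup_x |f'(x)| < ∞ and sup_x |f''(x)| < ∞. Then for every N > 0 and every x ∈ ℝ, ∫_ℝ (f'(x+u) - f'(x)) u ν_α(du) = ∫_{-N}^{N} K_{ν_α}(t,N) f''(x+t) dt + ∫_{|u|>N} (f'(x+u) - f'(x)) u ν_α(du), where K_{ν_α}(t,N) = 1_{[0,N]}(t) ∫_{(t,N]} u ν_α(du) + 1_{[-N,0)}(t) ∫_{[-N,t)} (-u) ν_α(du), and all displayed integrals converge absolutely. -/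
open MeasureTheory

/-- The kernel `K_{ν_α}(t,N) = 1_{[0,N]}(t) ∫_{(t,N]} u ν_α(du) + 1_{[-N,0)}(t) ∫_{[-N,t)} (-u) ν_α(du)`. -/
noncomputable def Knu (α m₁ m₂ N t : ℝ) : ℝ :=
  (if t ∈ Set.Icc (0 : ℝ) N then ∫ u in Set.Ioc t N, u ∂(nuStable α m₁ m₂) else 0) +
  (if t ∈ Set.Ico (-N) (0 : ℝ) then ∫ u in Set.Ico (-N) t, -u ∂(nuStable α m₁ m₂) else 0)

/-!
For a `C¹` function `g`, the integrand `u • (g (x + u) - g x)` is `|u|` times the integral of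
`g' (x + t)` over the `t` between `0` and `u`. Integrating this over `|u| ≤ N` against a measure
`ν` and exchanging the two integrals, each `t` collects the weight `∫ |u| ν(du)` over those `u` with
`|u| ≤ N` that lie beyond `t` as seen from `0`, which is the kernel `K_ν(t, N)`. Near the origin the
double integral is dominated by a multiple of `u²`, and for `|u| > N` boundedness of `g` dominates
the integrand by a multiple of `|u|`; `ν_α` integrates the former because `α < 2` and the latter
because `1 < α`.
-/

open Set
open scoped Interval

section Kernel

/-- The kernel `K_ν(t, N)` of an arbitrary measure `ν` on `ℝ`, of which `Knu` is the case of the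
`α`-stable Lévy measure. -/
noncomputable def levyKernel (ν : Measure ℝ) (N t : ℝ) : ℝ :=
  (if t ∈ Icc 0 N then ∫ u in Ioc t N, u ∂ν else 0) +
  (if t ∈ Ico (-N) 0 then ∫ u in Ico (-N) t, -u ∂ν else 0)

/-- The pairs `(u, t)` such that `t` lies between `0` and `u`, the domain of integration of the
double integral behind `levyKernel`. The endpoints are chosen so that the sections at fixed `t` are
the half-lines `u > t` and `u < t` occurring in `levyKernel`, also when `ν` has atoms. -/
def segmentRegion : Set (ℝ × ℝ) :=
  {p | (0 ≤ p.2 ∧ p.2 < p.1) ∨ (p.1 < p.2 ∧ p.2 < 0)}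

lemma measurableSet_segmentRegion : MeasurableSet segmentRegion := by
  unfold segmentRegion
  measurability

lemma preimage_mk_segmentRegion_ae_eq (u : ℝ) :
    Prod.mk u ⁻¹' segmentRegion =ᵐ[volume] Ι 0 u := by
  have hsection : Prod.mk u ⁻¹' segmentRegion = Ico 0 u ∪ Ioo u 0 := rfl
  rw [hsection, uIoc_eq_union]
  exact Ico_ae_eq_Ioc.union Ioo_ae_eq_Ioc

lemma levyKernel_eq_setIntegral_abs (ν : Measure ℝ) (N t : ℝ) :
    levyKernel ν N t = ∫ u in {u | (u, t) ∈ segmentRegion}, |u| ∂ν.restrict (Icc (-N) N) := by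
  have hmeas : MeasurableSet {u | (u, t) ∈ segmentRegion} :=
    measurable_prodMk_right measurableSet_segmentRegion
  rw [Measure.restrict_restrict hmeas]
  rcases le_or_gt 0 t with ht | ht
  · have hsection : {u | (u, t) ∈ segmentRegion} ∩ Icc (-N) N = Ioc t N := by
      ext u
      simp only [segmentRegion, mem_inter_iff, mem_ofPred_eq, mem_Icc, mem_Ioc]
      grind
    have habs : ∫ u in Ioc t N, |u| ∂ν = ∫ u in Ioc t N, u ∂ν :=
      setIntegral_congr_fun measurableSet_Ioc fun u hu => abs_of_pos (ht.trans_lt hu.1)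
    rw [hsection, habs]
    by_cases htN : t ≤ N
    · simp [levyKernel, ht, htN]
    · simp [levyKernel, ht, htN, Ioc_eq_empty_of_le (not_le.1 htN).le]
  · have hsection : {u | (u, t) ∈ segmentRegion} ∩ Icc (-N) N = Ico (-N) t := by
      ext u
      simp only [segmentRegion, mem_inter_iff, mem_ofPred_eq, mem_Icc, mem_Ico]
      grind
    have habs : ∫ u in Ico (-N) t, |u| ∂ν = ∫ u in Ico (-N) t, -u ∂ν :=
      setIntegral_congr_fun measurableSet_Ico fun u hu => abs_of_neg (hu.2.trans ht)
    rw [hsection, habs]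
    by_cases htN : -N ≤ t
    · simp [levyKernel, ht, ht.not_ge, htN]
    · simp [levyKernel, ht, ht.not_ge, htN, Ico_eq_empty_of_le (not_le.1 htN).le]

lemma levyKernel_of_notMem_Icc (ν : Measure ℝ) {N t : ℝ} (ht : t ∉ Icc (-N) N) :
    levyKernel ν N t = 0 := by
  have hpos : t ∉ Icc 0 N := by grind
  have hneg : t ∉ Ico (-N) 0 := by grind
  simp only [levyKernel, if_neg hpos, if_neg hneg, add_zero]

end Kernel

section Fubini

variable {E : Type*} [NormedAddCommGroup E] [NormedSpace ℝ E]

/-- The integrand of the double integral in `u` and `t` that is evaluated in both orders, for a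
density `h` playing the role of `t ↦ g' (x + t)`. -/
noncomputable def segmentIntegrand (h : ℝ → E) : ℝ × ℝ → E :=
  segmentRegion.indicator fun p => |p.1| • h p.2

lemma norm_segmentIntegrand (h : ℝ → E) (p : ℝ × ℝ) :
    ‖segmentIntegrand h p‖ = segmentIntegrand (fun t => ‖h t‖) p := by
  simp only [segmentIntegrand, norm_indicator_eq_indicator_norm, norm_smul, Real.norm_eq_abs,
    abs_abs, smul_eq_mul]

lemma integral_segmentIntegrand_prodMk_left (h : ℝ → E) (u : ℝ) :
    ∫ t, segmentIntegrand h (u, t) = u • ∫ t in 0..u, h t :=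
  calc ∫ t, segmentIntegrand h (u, t)
      = ∫ t in Prod.mk u ⁻¹' segmentRegion, |u| • h t :=
        integral_indicator (measurable_prodMk_left measurableSet_segmentRegion)
    _ = |u| • ∫ t in Ι 0 u, h t := by
        rw [setIntegral_congr_set (preimage_mk_segmentRegion_ae_eq u), integral_smul]
    _ = u • ∫ t in 0..u, h t := by
        rw [intervalIntegral.intervalIntegral_eq_integral_uIoc, smul_smul]
        split_ifs with hu
        · rw [abs_of_nonneg hu, mul_one]
        · rw [abs_of_neg (not_le.1 hu), mul_neg_one]

lemma integral_segmentIntegrand_prodMk_right [CompleteSpace E] (ν : Measure ℝ) (N : ℝ)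
    (h : ℝ → E) (t : ℝ) :
    ∫ u in Icc (-N) N, segmentIntegrand h (u, t) ∂ν = levyKernel ν N t • h t := by
  rw [levyKernel_eq_setIntegral_abs, ← integral_smul_const]
  exact integral_indicator (measurable_prodMk_right measurableSet_segmentRegion)

lemma integrable_segmentIntegrand_iff {μ : Measure ℝ} [SFinite μ] {h : ℝ → E}
    (hh : LocallyIntegrable h) :
    Integrable (segmentIntegrand h) (μ.prod volume) ↔
      Integrable (fun u => u * ∫ t in 0..u, ‖h t‖) μ := by
  have hmeas : AEStronglyMeasurable (segmentIntegrand h) (μ.prod volume) :=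
    (continuous_fst.abs.aestronglyMeasurable.smul
      hh.aestronglyMeasurable.comp_snd).indicator measurableSet_segmentRegion
  have hsection (u : ℝ) : Integrable fun t => segmentIntegrand h (u, t) := by
    have hint : IntegrableOn (fun t => |u| • h t) (Ι 0 u) :=
      ((hh.integrableOn_isCompact isCompact_uIcc).mono_set uIoc_subset_uIcc).smul |u|
    exact (hint.congr_set_ae (preimage_mk_segmentRegion_ae_eq u)).integrable_indicator
      (measurable_prodMk_left measurableSet_segmentRegion)
  simp only [integrable_prod_iff hmeas, hsection, Filter.eventually_true, true_and,
    norm_segmentIntegrand, integral_segmentIntegrand_prodMk_left, smul_eq_mul]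

lemma integrable_segmentIntegrand_of_continuous {ν : Measure ℝ} [SFinite ν] {N : ℝ}
    (hν : IntegrableOn (fun u => u ^ 2) (Icc (-N) N) ν) {h : ℝ → E} (hh : Continuous h) :
    Integrable (segmentIntegrand h) ((ν.restrict (Icc (-N) N)).prod volume) := by
  rw [integrable_segmentIntegrand_iff hh.locallyIntegrable]
  obtain ⟨C, hC⟩ := isCompact_Icc.exists_bound_of_continuousOn (s := Icc (-N) N) hh.continuousOn
  have hprimitive : Continuous fun u => ∫ t in 0..u, ‖h t‖ :=
    intervalIntegral.continuous_primitive (fun a b => hh.norm.intervalIntegrable a b) 0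
  refine (hν.const_mul C).mono' (continuous_id.mul hprimitive).aestronglyMeasurable ?_
  filter_upwards [ae_restrict_mem measurableSet_Icc] with u hu
  have hbound : ‖∫ t in 0..u, ‖h t‖‖ ≤ C * |u - 0| := by
    refine intervalIntegral.norm_integral_le_of_norm_le_const fun t ht => ?_
    rw [norm_norm]
    refine hC t ?_
    grind [mem_uIoc]
  calc ‖u * ∫ t in 0..u, ‖h t‖‖ ≤ |u| * (C * |u - 0|) := by
        rw [norm_mul, Real.norm_eq_abs u]
        gcongr
    _ = C * u ^ 2 := by rw [sub_zero, ← sq_abs]; ring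

variable {ν : Measure ℝ} [SFinite ν] {N : ℝ} {h : ℝ → E}

lemma integrableOn_smul_intervalIntegral (hν : IntegrableOn (fun u => u ^ 2) (Icc (-N) N) ν)
    (hh : Continuous h) : IntegrableOn (fun u => u • ∫ t in 0..u, h t) (Icc (-N) N) ν := by
  simpa only [IntegrableOn, integral_segmentIntegrand_prodMk_left] using
    (integrable_segmentIntegrand_of_continuous hν hh).integral_prod_left

variable [CompleteSpace E]

lemma integrable_levyKernel_smul (hν : IntegrableOn (fun u => u ^ 2) (Icc (-N) N) ν)
    (hh : Continuous h) : Integrable fun t => levyKernel ν N t • h t := by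
  simpa only [integral_segmentIntegrand_prodMk_right] using
    (integrable_segmentIntegrand_of_continuous hν hh).integral_prod_right

theorem setIntegral_smul_intervalIntegral_eq_levyKernel
    (hν : IntegrableOn (fun u => u ^ 2) (Icc (-N) N) ν) (hh : Continuous h) :
    ∫ u in Icc (-N) N, u • (∫ t in 0..u, h t) ∂ν =
      ∫ t in Icc (-N) N, levyKernel ν N t • h t := by
  have hvanish (t : ℝ) (ht : t ∉ Icc (-N) N) : levyKernel ν N t • h t = 0 := by
    rw [levyKernel_of_notMem_Icc ν ht, zero_smul]
  rw [setIntegral_eq_integral_of_forall_compl_eq_zero hvanish]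
  simpa only [integral_segmentIntegrand_prodMk_left, integral_segmentIntegrand_prodMk_right] using
    integral_integral_swap (f := fun u t => segmentIntegrand h (u, t))
      (integrable_segmentIntegrand_of_continuous hν hh)

end Fubini

section StableMoments

lemma integrableOn_comp_abs {F : Type*} [NormedAddCommGroup F] {φ : ℝ → F} {s : Set ℝ}
    (hs : MeasurableSet s) (hφ : IntegrableOn φ (s ∩ Ioi 0)) :
    IntegrableOn (fun u => φ |u|) {u | |u| ∈ s} := by
  have hpos : IntegrableOn (fun u => φ |u|) (s ∩ Ioi 0) :=
    hφ.congr_fun (fun u hu => by rw [abs_of_pos hu.2]) (hs.inter measurableSet_Ioi)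
  have hneg : IntegrableOn (fun u => φ |u|) (Neg.neg ⁻¹' (s ∩ Ioi 0)) := by
    simpa only [Function.comp_def, abs_neg] using
      ((Measure.measurePreserving_neg volume).integrableOn_comp_preimage
        (Homeomorph.neg ℝ).measurableEmbedding).2 hpos
  have hzero : IntegrableOn (fun u => φ |u|) {(0 : ℝ)} :=
    integrableOn_singleton (hx := by simp)
  refine ((hpos.union hneg).union hzero).mono_set ?_
  rintro u (hu : |u| ∈ s)
  rcases lt_trichotomy u 0 with hu0 | hu0 | hu0
  · exact Or.inl (Or.inr ⟨abs_of_neg hu0 ▸ hu, neg_pos.2 hu0⟩)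
  · exact Or.inr hu0
  · exact Or.inl (Or.inl ⟨abs_of_pos hu0 ▸ hu, hu0⟩)

instance (α m₁ m₂ : ℝ) : SFinite (nuStable α m₁ m₂) := by
  unfold nuStable
  infer_instance

lemma nuStable_le_withDensity (α m₁ m₂ : ℝ) :
    nuStable α m₁ m₂ ≤
      volume.withDensity fun u => ENNReal.ofReal ((|m₁| + |m₂|) * |u| ^ (-α - 1)) := by
  refine withDensity_mono (Filter.Eventually.of_forall fun u => ENNReal.ofReal_le_ofReal ?_)
  have hm₁ : m₁ ≤ |m₁| + |m₂| := (le_abs_self m₁).trans (le_add_of_nonneg_right (abs_nonneg m₂))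
  have hm₂ : m₂ ≤ |m₁| + |m₂| := (le_abs_self m₂).trans (le_add_of_nonneg_left (abs_nonneg m₁))
  split_ifs with hpos
  · rw [abs_of_pos hpos]
    gcongr
  · gcongr
  · positivity

lemma integrableOn_abs_rpow_nuStable {α p : ℝ} (m₁ m₂ : ℝ) {s : Set ℝ} (hs : MeasurableSet s)
    (hint : IntegrableOn (fun r => r ^ (p - α - 1)) (s ∩ Ioi 0)) :
    IntegrableOn (fun u => |u| ^ p) {u | |u| ∈ s} (nuStable α m₁ m₂) := by
  refine IntegrableOn.mono_measure ?_ (nuStable_le_withDensity α m₁ m₂)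
  rw [IntegrableOn, restrict_withDensity', integrable_withDensity_iff (by fun_prop) (by simp)]
  refine ((integrableOn_comp_abs hs hint).const_mul (|m₁| + |m₂|)).congr ?_
  filter_upwards [ae_restrict_of_ae (Measure.ae_ne volume 0)] with u hu
  rw [ENNReal.toReal_ofReal (by positivity), mul_left_comm, ← Real.rpow_add (abs_pos.2 hu)]
  ring_nf

lemma integrableOn_sq_nuStable {α : ℝ} (hα : α < 2) (m₁ m₂ N : ℝ) :
    IntegrableOn (fun u => u ^ 2) (Icc (-N) N) (nuStable α m₁ m₂) := by
  have hradial : IntegrableOn (fun r : ℝ => r ^ (2 - α - 1)) (Iic N ∩ Ioi 0) := by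
    rw [inter_comm, Ioi_inter_Iic]
    exact (intervalIntegral.intervalIntegrable_rpow' (by linarith)).1
  simpa only [Real.rpow_two, sq_abs, mem_Iic, abs_le, Icc_def] using
    integrableOn_abs_rpow_nuStable m₁ m₂ measurableSet_Iic hradial

lemma integrableOn_id_nuStable {α : ℝ} (hα : 1 < α) (m₁ m₂ : ℝ) {N : ℝ} (hN : 0 < N) :
    IntegrableOn (fun u => u) {u | N < |u|} (nuStable α m₁ m₂) := by
  have hradial : IntegrableOn (fun r : ℝ => r ^ (1 - α - 1)) (Ioi N ∩ Ioi 0) := by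
    rw [Ioi_inter_Ioi, sup_of_le_left hN.le]
    exact integrableOn_Ioi_rpow_of_lt (by linarith) hN
  have habs := integrableOn_abs_rpow_nuStable m₁ m₂ measurableSet_Ioi hradial
  simp only [Real.rpow_one] at habs
  exact (integrable_norm_iff measurable_id.aestronglyMeasurable).1 habs

end StableMoments

section Increments

variable {E : Type*} [NormedAddCommGroup E] [NormedSpace ℝ E] {g : ℝ → E}

lemma intervalIntegral_deriv_const_add [CompleteSpace E] (hg : ContDiff ℝ 1 g) (x u : ℝ) :
    ∫ t in 0..u, deriv g (x + t) = g (x + u) - g x := by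
  rw [intervalIntegral.integral_comp_add_left (deriv g), add_zero]
  exact intervalIntegral.integral_deriv_eq_sub (fun t _ => hg.differentiable_one t)
    (hg.continuous_deriv_one.intervalIntegrable x (x + u))

lemma integrableOn_smul_sub_of_bounded {ν : Measure ℝ} {s : Set ℝ}
    (hν : IntegrableOn (fun u => u) s ν) (hg : Continuous g) (hbdd : ∃ C, ∀ y, ‖g y‖ ≤ C) (x : ℝ) :
    IntegrableOn (fun u => u • (g (x + u) - g x)) s ν := by
  obtain ⟨C, hC⟩ := hbdd
  refine hν.smul_bdd (C + C) (by fun_prop) (Filter.Eventually.of_forall fun u => ?_)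
  exact (norm_sub_le _ _).trans (add_le_add (hC _) (hC _))

end Increments

theorem stmt_17_general {E : Type*} [NormedAddCommGroup E] [NormedSpace ℝ E] [CompleteSpace E]
    {ν : Measure ℝ} [SFinite ν] {N : ℝ} (hν : IntegrableOn (fun u => u ^ 2) (Icc (-N) N) ν)
    (hνtail : IntegrableOn (fun u => u) {u | N < |u|} ν)
    {g : ℝ → E} (hg : ContDiff ℝ 1 g) (hbdd : ∃ C, ∀ y, ‖g y‖ ≤ C) (x : ℝ) :
    Integrable (fun u => u • (g (x + u) - g x)) ν ∧
    IntegrableOn (fun t => levyKernel ν N t • deriv g (x + t)) (Icc (-N) N) ∧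
    IntegrableOn (fun u => u • (g (x + u) - g x)) {u | N < |u|} ν ∧
    ∫ u, u • (g (x + u) - g x) ∂ν =
      (∫ t in Icc (-N) N, levyKernel ν N t • deriv g (x + t)) +
      ∫ u in {u | N < |u|}, u • (g (x + u) - g x) ∂ν := by
  have hcont : Continuous fun t => deriv g (x + t) :=
    hg.continuous_deriv_one.comp (continuous_const_add x)
  have hcompl : {u : ℝ | N < |u|} = (Icc (-N) N)ᶜ := by
    ext u
    simp [← abs_le]
  have hnear : IntegrableOn (fun u => u • (g (x + u) - g x)) (Icc (-N) N) ν := by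
    simpa only [intervalIntegral_deriv_const_add hg] using
      integrableOn_smul_intervalIntegral hν hcont
  have hfar : IntegrableOn (fun u => u • (g (x + u) - g x)) {u | N < |u|} ν :=
    integrableOn_smul_sub_of_bounded hνtail hg.continuous hbdd x
  have hint : Integrable (fun u => u • (g (x + u) - g x)) ν := by
    rw [hcompl] at hfar
    exact integrableOn_univ.1 (union_compl_self (Icc (-N) N) ▸ hnear.union hfar)
  refine ⟨hint, (integrable_levyKernel_smul hν hcont).integrableOn, hfar, ?_⟩
  rw [← setIntegral_smul_intervalIntegral_eq_levyKernel hν hcont, hcompl]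
  simpa only [intervalIntegral_deriv_const_add hg] using
    (integral_add_compl measurableSet_Icc hint).symm

theorem stmt_17 (α m₁ m₂ : ℝ) (hα : 1 < α) (hα2 : α < 2)
    (hm₁ : 0 ≤ m₁) (hm₂ : 0 ≤ m₂) (hm : 0 < m₁ + m₂)
    (f : ℝ → ℝ) (hf : ContDiff ℝ 2 f)
    (hf1 : ∃ C : ℝ, ∀ x : ℝ, |deriv f x| ≤ C)
    (hf2 : ∃ C : ℝ, ∀ x : ℝ, |deriv (deriv f) x| ≤ C)
    (N : ℝ) (hN : 0 < N) (x : ℝ) :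
    Integrable (fun u : ℝ => (deriv f (x + u) - deriv f x) * u) (nuStable α m₁ m₂) ∧
    IntegrableOn (fun t : ℝ => Knu α m₁ m₂ N t * deriv (deriv f) (x + t))
      (Set.Icc (-N) N) ∧
    Integrable (fun u : ℝ => (deriv f (x + u) - deriv f x) * u)
      ((nuStable α m₁ m₂).restrict {u : ℝ | N < |u|}) ∧
    ∫ u : ℝ, (deriv f (x + u) - deriv f x) * u ∂(nuStable α m₁ m₂) =
      (∫ t in Set.Icc (-N) N, Knu α m₁ m₂ N t * deriv (deriv f) (x + t)) +
      ∫ u in {u : ℝ | N < |u|}, (deriv f (x + u) - deriv f x) * u ∂(nuStable α m₁ m₂) := by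
  simpa only [smul_eq_mul, mul_comm (deriv f _ - _), IntegrableOn, levyKernel, Knu] using
    stmt_17_general (integrableOn_sq_nuStable hα2 m₁ m₂ N) (integrableOn_id_nuStable hα m₁ m₂ hN)
      hf.deriv' hf1 x
end
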